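/- arXiv:math/0111114 — 3 statements merged into one kernel-verified Lean document; each statement's English description precedes it below -/
import Mathlib

section
/- Let E, P ∈ GL(m,k) and F, Q ∈ GL(n,k). Then there is an algebra isomorphism ψ : B(E,F) → B(ᵀP·E·P, ᵀQ·F·Q) determined by ψ(z) = P·y·Q⁻¹ entrywise, i.e. ψ(z_{ij}) = (P·y·Q⁻¹)_{ij}, where z = (z_{ij}) denotes the matrix of generators of B(E,F) and y = (y_{ij}) the matrix of generators of B(ᵀP·E·P, ᵀQ·F·Q); in particular B(E,F) and B(ᵀP·E·P, ᵀQ·F·Q) are isomorphic as k-algebras. -/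
open scoped TensorProduct
open Matrix

noncomputable section

variable (k : Type) [Field k]

/-- The matrix of free generators of the free algebra on `Fin m × Fin n`. -/
def gens (m n : ℕ) : Matrix (Fin m) (Fin n) (FreeAlgebra k (Fin m × Fin n)) :=
  Matrix.of fun i j => FreeAlgebra.ι k (i, j)

/-- A scalar matrix viewed as a matrix over a `k`-algebra. -/
def liftMat {A : Type} [Semiring A] [Algebra k A] {p q : ℕ}
    (M : Matrix (Fin p) (Fin q) k) : Matrix (Fin p) (Fin q) A :=
  M.map (algebraMap k A)

/-- The defining relations of the algebra `B(E,F)`: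
`F⁻¹ * ᵀz * E * z = 1` and `z * F⁻¹ * ᵀz * E = 1`. -/
inductive BRel {m n : ℕ} (E : Matrix (Fin m) (Fin m) k) (F : Matrix (Fin n) (Fin n) k) :
    FreeAlgebra k (Fin m × Fin n) → FreeAlgebra k (Fin m × Fin n) → Prop
  | left (i j : Fin n) : BRel E F
      ((liftMat k (A := FreeAlgebra k (Fin m × Fin n)) F⁻¹ * (gens k m n)ᵀ *
          liftMat k (A := FreeAlgebra k (Fin m × Fin n)) E * gens k m n :
          Matrix (Fin n) (Fin n) (FreeAlgebra k (Fin m × Fin n))) i j)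
      ((1 : Matrix (Fin n) (Fin n) (FreeAlgebra k (Fin m × Fin n))) i j)
  | right (i j : Fin m) : BRel E F
      ((gens k m n * liftMat k (A := FreeAlgebra k (Fin m × Fin n)) F⁻¹ * (gens k m n)ᵀ *
          liftMat k (A := FreeAlgebra k (Fin m × Fin n)) E :
          Matrix (Fin m) (Fin m) (FreeAlgebra k (Fin m × Fin n))) i j)
      ((1 : Matrix (Fin m) (Fin m) (FreeAlgebra k (Fin m × Fin n))) i j)

/-- The algebra `B(E,F)`.  The Hopf algebra `B(E)` is `BB k E E`. -/
abbrev BB {m n : ℕ} (E : Matrix (Fin m) (Fin m) k) (F : Matrix (Fin n) (Fin n) k) :=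
  RingQuot (BRel k E F)

/-- The matrix of generators of `B(E,F)`. -/
def ZMat {m n : ℕ} (E : Matrix (Fin m) (Fin m) k) (F : Matrix (Fin n) (Fin n) k) :
    Matrix (Fin m) (Fin n) (BB k E F) :=
  Matrix.of fun i j => RingQuot.mkAlgHom k (BRel k E F) (gens k m n i j)
section helpers
variable {k}
variable {A B : Type} [Ring A] [Algebra k A] [Ring B] [Algebra k B]

lemma liftMat_mul' {p q r : ℕ} (M : Matrix (Fin p) (Fin q) k) (N : Matrix (Fin q) (Fin r) k) :
    liftMat k (A := A) (M * N) = liftMat k (A := A) M * liftMat k (A := A) N := by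
  simp [liftMat, Matrix.map_mul]

lemma liftMat_one' {p : ℕ} : liftMat k (A := A) (1 : Matrix (Fin p) (Fin p) k) = 1 := by
  simp [liftMat, Matrix.map_one]

lemma liftMat_map' (f : A →ₐ[k] B) {p q : ℕ} (M : Matrix (Fin p) (Fin q) k) :
    (liftMat k (A := A) M).map f = liftMat k (A := B) M := by
  ext i j; simp [liftMat]

lemma map_mul' (f : A →ₐ[k] B) {p q r : ℕ} (M : Matrix (Fin p) (Fin q) A)
    (N : Matrix (Fin q) (Fin r) A) : (M * N).map f = M.map f * N.map f := by
  ext i j; simp [Matrix.mul_apply]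

lemma transpose_lift_mul' {p q r : ℕ} (M : Matrix (Fin p) (Fin q) k)
    (N : Matrix (Fin q) (Fin r) A) : (liftMat k (A := A) M * N)ᵀ = Nᵀ * liftMat k (A := A) Mᵀ := by
  ext i j; simp [Matrix.mul_apply, liftMat, Algebra.commutes]

lemma transpose_mul_lift' {p q r : ℕ} (M : Matrix (Fin q) (Fin r) k)
    (N : Matrix (Fin p) (Fin q) A) : (N * liftMat k (A := A) M)ᵀ = liftMat k (A := A) Mᵀ * Nᵀ := by
  ext i j; simp [Matrix.mul_apply, liftMat, Algebra.commutes]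

variable {m n : ℕ}

lemma ZMat_eq' (E : Matrix (Fin m) (Fin m) k) (F : Matrix (Fin n) (Fin n) k) :
    ZMat k E F = (gens k m n).map (RingQuot.mkAlgHom k (BRel k E F)) := rfl

lemma ZMat_left' (E : Matrix (Fin m) (Fin m) k) (F : Matrix (Fin n) (Fin n) k) :
    liftMat k (A := BB k E F) F⁻¹ * (ZMat k E F)ᵀ * liftMat k (A := BB k E F) E * ZMat k E F = 1 := by
  have h : (liftMat k (A := FreeAlgebra k (Fin m × Fin n)) F⁻¹ * (gens k m n)ᵀ *
      liftMat k (A := FreeAlgebra k (Fin m × Fin n)) E * gens k m n).map (RingQuot.mkAlgHom k (BRel k E F)) =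
      (1 : Matrix (Fin n) (Fin n) _).map (RingQuot.mkAlgHom k (BRel k E F)) := by
    ext i j
    exact RingQuot.mkAlgHom_rel k (BRel.left i j)
  rw [map_mul', map_mul', map_mul', liftMat_map', liftMat_map', Matrix.transpose_map,
    ← ZMat_eq', Matrix.map_one _ (map_zero _) (map_one _)] at h
  exact h

lemma ZMat_right' (E : Matrix (Fin m) (Fin m) k) (F : Matrix (Fin n) (Fin n) k) :
    ZMat k E F * liftMat k (A := BB k E F) F⁻¹ * (ZMat k E F)ᵀ * liftMat k (A := BB k E F) E = 1 := by
  have h : (gens k m n * liftMat k (A := FreeAlgebra k (Fin m × Fin n)) F⁻¹ * (gens k m n)ᵀ *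
      liftMat k (A := FreeAlgebra k (Fin m × Fin n)) E).map (RingQuot.mkAlgHom k (BRel k E F)) =
      (1 : Matrix (Fin m) (Fin m) _).map (RingQuot.mkAlgHom k (BRel k E F)) := by
    ext i j
    exact RingQuot.mkAlgHom_rel k (BRel.right i j)
  rw [map_mul', map_mul', map_mul', liftMat_map', liftMat_map', Matrix.transpose_map,
    ← ZMat_eq', Matrix.map_one _ (map_zero _) (map_one _)] at h
  exact h

lemma exists_hom' (E : Matrix (Fin m) (Fin m) k) (F : Matrix (Fin n) (Fin n) k)
    (W : Matrix (Fin m) (Fin n) A)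
    (h1 : liftMat k (A := A) F⁻¹ * Wᵀ * liftMat k (A := A) E * W = 1)
    (h2 : W * liftMat k (A := A) F⁻¹ * Wᵀ * liftMat k (A := A) E = 1) :
    ∃ f : BB k E F →ₐ[k] A, (ZMat k E F).map f = W := by
  let g : FreeAlgebra k (Fin m × Fin n) →ₐ[k] A := FreeAlgebra.lift k fun p => W p.1 p.2
  have hg : (gens k m n).map g = W := by
    ext i j; simp [gens, g]
  have hr : ∀ ⦃x y⦄, BRel k E F x y → g x = g y := by
    intro x y h
    cases h with
    | left i j =>
      have : (liftMat k (A := FreeAlgebra k (Fin m × Fin n)) F⁻¹ * (gens k m n)ᵀ *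
          liftMat k (A := FreeAlgebra k (Fin m × Fin n)) E * gens k m n).map g = (1 : Matrix (Fin n) (Fin n) _).map g := by
        rw [map_mul', map_mul', map_mul', liftMat_map', liftMat_map', Matrix.transpose_map,
          hg, Matrix.map_one _ (map_zero _) (map_one _), h1]
      exact congrFun (congrFun this i) j
    | right i j =>
      have : (gens k m n * liftMat k (A := FreeAlgebra k (Fin m × Fin n)) F⁻¹ * (gens k m n)ᵀ *
          liftMat k (A := FreeAlgebra k (Fin m × Fin n)) E).map g = (1 : Matrix (Fin m) (Fin m) _).map g := by
        rw [map_mul', map_mul', map_mul', liftMat_map', liftMat_map', Matrix.transpose_map,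
          hg, Matrix.map_one _ (map_zero _) (map_one _), h2]
      exact congrFun (congrFun this i) j
  refine ⟨RingQuot.liftAlgHom k ⟨g, hr⟩, ?_⟩
  ext i j
  have := congrFun (congrFun hg i) j
  simpa [ZMat] using this

lemma hom_ext' (E : Matrix (Fin m) (Fin m) k) (F : Matrix (Fin n) (Fin n) k)
    (f g : BB k E F →ₐ[k] A) (h : (ZMat k E F).map f = (ZMat k E F).map g) : f = g := by
  apply RingQuot.ringQuot_ext'
  apply FreeAlgebra.hom_ext
  funext p
  exact congrFun (congrFun h p.1) p.2

lemma exists_conj' (E E' P P' : Matrix (Fin m) (Fin m) k) (F F' Q Q' : Matrix (Fin n) (Fin n) k)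
    (hE : E' = Pᵀ * E * P) (hF : F⁻¹ = Q * F'⁻¹ * Qᵀ)
    (hP : P * P' = 1) (hQ : Q * Q' = 1) :
    ∃ f : BB k E F →ₐ[k] BB k E' F',
      (ZMat k E F).map f = liftMat k (A := BB k E' F') P * ZMat k E' F' * liftMat k (A := BB k E' F') Q' := by
  have hQ2 : Q' * Q = 1 := mul_eq_one_comm.mp hQ
  have hQt : Qᵀ * Q'ᵀ = 1 := by rw [← Matrix.transpose_mul, hQ2, Matrix.transpose_one]
  have L := ZMat_left' E' F'
  have R := ZMat_right' E' F'
  have e1 : liftMat k (A := BB k E' F') Q' * liftMat k (A := BB k E' F') F⁻¹ * liftMat k (A := BB k E' F') Q'ᵀ = liftMat k (A := BB k E' F') F'⁻¹ := by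
    rw [← liftMat_mul', ← liftMat_mul', hF]
    congr 1
    calc _ = (Q' * Q) * F'⁻¹ * (Qᵀ * Q'ᵀ) := by simp only [Matrix.mul_assoc]
      _ = _ := by rw [hQ2, hQt]; simp
  have e1' : liftMat k (A := BB k E' F') F⁻¹ * liftMat k (A := BB k E' F') Q'ᵀ = liftMat k (A := BB k E' F') Q * liftMat k (A := BB k E' F') F'⁻¹ := by
    rw [← liftMat_mul', ← liftMat_mul', hF, Matrix.mul_assoc, hQt, Matrix.mul_one]
  have e2 : liftMat k (A := BB k E' F') Pᵀ * liftMat k (A := BB k E' F') E * liftMat k (A := BB k E' F') P = liftMat k (A := BB k E' F') E' := by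
    rw [← liftMat_mul', ← liftMat_mul', hE]
  have e2' : liftMat k (A := BB k E' F') Pᵀ * liftMat k (A := BB k E' F') E = liftMat k (A := BB k E' F') E' * liftMat k (A := BB k E' F') P' := by
    rw [← liftMat_mul', ← liftMat_mul', hE, Matrix.mul_assoc _ P, hP, Matrix.mul_one]
  have eQ : liftMat k (A := BB k E' F') Q * liftMat k (A := BB k E' F') Q' = 1 := by
    rw [← liftMat_mul', hQ, liftMat_one']
  have eP : liftMat k (A := BB k E' F') P * liftMat k (A := BB k E' F') P' = 1 := by
    rw [← liftMat_mul', hP, liftMat_one']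
  have hT : (liftMat k (A := BB k E' F') P * ZMat k E' F' * liftMat k (A := BB k E' F') Q')ᵀ
      = liftMat k (A := BB k E' F') Q'ᵀ * (ZMat k E' F')ᵀ * liftMat k (A := BB k E' F') Pᵀ := by
    rw [transpose_mul_lift', transpose_lift_mul', Matrix.mul_assoc]
  apply exists_hom'
  · rw [hT]
    calc _ = (liftMat k (A := BB k E' F') F⁻¹ * liftMat k (A := BB k E' F') Q'ᵀ) * (ZMat k E' F')ᵀ *
            (liftMat k (A := BB k E' F') Pᵀ * liftMat k (A := BB k E' F') E * liftMat k (A := BB k E' F') P) * ZMat k E' F' * liftMat k (A := BB k E' F') Q' := by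
          simp only [Matrix.mul_assoc]
      _ = liftMat k (A := BB k E' F') Q * (liftMat k (A := BB k E' F') F'⁻¹ * (ZMat k E' F')ᵀ * liftMat k (A := BB k E' F') E' * ZMat k E' F')
            * liftMat k (A := BB k E' F') Q' := by
          rw [e1', e2]; simp only [Matrix.mul_assoc]
      _ = 1 := by rw [L, Matrix.mul_one, eQ]
  · rw [hT]
    calc _ = liftMat k (A := BB k E' F') P * ZMat k E' F' * (liftMat k (A := BB k E' F') Q' * liftMat k (A := BB k E' F') F⁻¹ * liftMat k (A := BB k E' F') Q'ᵀ) *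
            (ZMat k E' F')ᵀ * (liftMat k (A := BB k E' F') Pᵀ * liftMat k (A := BB k E' F') E) := by
          simp only [Matrix.mul_assoc]
      _ = liftMat k (A := BB k E' F') P * (ZMat k E' F' * liftMat k (A := BB k E' F') F'⁻¹ * (ZMat k E' F')ᵀ * liftMat k (A := BB k E' F') E')
            * liftMat k (A := BB k E' F') P' := by
          rw [e1, e2']; simp only [Matrix.mul_assoc]
      _ = 1 := by rw [R, Matrix.mul_one, eP]

lemma comp_id' (E E' P P' : Matrix (Fin m) (Fin m) k) (F F' Q Q' : Matrix (Fin n) (Fin n) k)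
    (hP : P' * P = 1) (hQ : Q' * Q = 1)
    (f : BB k E F →ₐ[k] BB k E' F') (g : BB k E' F' →ₐ[k] BB k E F)
    (hf : (ZMat k E F).map f = liftMat k (A := BB k E' F') P * ZMat k E' F' * liftMat k (A := BB k E' F') Q')
    (hg : (ZMat k E' F').map g = liftMat k (A := BB k E F) P' * ZMat k E F * liftMat k (A := BB k E F) Q) :
    f.comp g = AlgHom.id k _ := by
  apply hom_ext'
  have : (ZMat k E' F').map (f.comp g) = ((ZMat k E' F').map g).map f := rfl
  rw [this, hg, map_mul', map_mul', hf, liftMat_map', liftMat_map']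
  calc _ = (liftMat k (A := BB k E' F') P' * liftMat k (A := BB k E' F') P) * ZMat k E' F' * (liftMat k (A := BB k E' F') Q' * liftMat k (A := BB k E' F') Q) := by
        simp only [Matrix.mul_assoc]
    _ = ZMat k E' F' := by
        rw [← liftMat_mul', ← liftMat_mul', hP, hQ, liftMat_one', liftMat_one', Matrix.mul_one,
          Matrix.one_mul]
    _ = _ := rfl

end helpers

/-- **Statement 3.** For `E, P ∈ GL(m,k)` and `F, Q ∈ GL(n,k)`, there is an algebra
isomorphism `ψ : B(E,F) → B(ᵀP·E·P, ᵀQ·F·Q)` with `ψ(z) = P·y·Q⁻¹` entrywise. -/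
theorem BB_pair_iso_transpose_conj {m n : ℕ}
    (E P : Matrix (Fin m) (Fin m) k) (F Q : Matrix (Fin n) (Fin n) k)
    (hE : IsUnit E.det) (hP : IsUnit P.det) (hF : IsUnit F.det) (hQ : IsUnit Q.det) :
    ∃ ψ : BB k E F ≃ₐ[k] BB k (Pᵀ * E * P) (Qᵀ * F * Q),
      ∀ i j, ψ (ZMat k E F i j) =
        (liftMat k (A := BB k (Pᵀ * E * P) (Qᵀ * F * Q)) P * ZMat k (Pᵀ * E * P) (Qᵀ * F * Q) *
          liftMat k (A := BB k (Pᵀ * E * P) (Qᵀ * F * Q)) Q⁻¹ :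
          Matrix (Fin m) (Fin n) (BB k (Pᵀ * E * P) (Qᵀ * F * Q))) i j := by
  have p1 : P * P⁻¹ = 1 := Matrix.mul_nonsing_inv P hP
  have p2 : P⁻¹ * P = 1 := Matrix.nonsing_inv_mul P hP
  have q1 : Q * Q⁻¹ = 1 := Matrix.mul_nonsing_inv Q hQ
  have q2 : Q⁻¹ * Q = 1 := Matrix.nonsing_inv_mul Q hQ
  have pt : P⁻¹ᵀ * Pᵀ = 1 := by rw [← Matrix.transpose_mul, p1, Matrix.transpose_one]
  have qt : Q⁻¹ᵀ * Qᵀ = 1 := by rw [← Matrix.transpose_mul, q1, Matrix.transpose_one]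
  have hFi : (Qᵀ * F * Q)⁻¹ = Q⁻¹ * F⁻¹ * Q⁻¹ᵀ := by
    rw [Matrix.mul_inv_rev, Matrix.mul_inv_rev, Matrix.transpose_nonsing_inv, Matrix.mul_assoc]
  obtain ⟨f, hf⟩ := exists_conj' E (Pᵀ * E * P) P P⁻¹ F (Qᵀ * F * Q) Q Q⁻¹ rfl (by
    rw [hFi]
    calc F⁻¹ = (Q * Q⁻¹) * F⁻¹ * (Q⁻¹ᵀ * Qᵀ) := by rw [q1, qt]; simp
      _ = _ := by simp only [Matrix.mul_assoc]) p1 q1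
  obtain ⟨g, hg⟩ := exists_conj' (Pᵀ * E * P) E P⁻¹ P (Qᵀ * F * Q) F Q⁻¹ Q (by
    calc E = (P⁻¹ᵀ * Pᵀ) * E * (P * P⁻¹) := by rw [p1, pt]; simp
      _ = _ := by simp only [Matrix.mul_assoc]) hFi p2 q2
  refine ⟨AlgEquiv.ofAlgHom f g (comp_id' _ _ _ _ _ _ _ _ p2 q2 f g hf hg)
    (comp_id' _ _ _ _ _ _ _ _ p1 q1 g f hg hf), fun i j => ?_⟩
  exact congrFun (congrFun hf i) j
end
end

section
/- Let E ∈ GL(m,k) and F ∈ GL(n,k), and assume B(E,F) ≠ 0. Let β : B(E,F) → B(E,F) ⊗ B(F) be the unique algebra homomorphism with β(z_{ij}) = Σ_{k=1}^n z_{ik} ⊗ b_{kj}. Then the linear map κ_r : B(E,F) ⊗ B(E,F) → B(E,F) ⊗ B(F) defined by κ_r = (m_Z ⊗ id_{B(F)}) ∘ (id_{B(E,F)} ⊗ β), where m_Z is the multiplication of B(E,F), is bijective. -/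
open scoped TensorProduct
open Matrix

noncomputable section

variable (k : Type) [Field k]

section helpers
variable {k}

lemma bb_form {A : Type} [Ring A] [Algebra k A] {p q : ℕ}
    (x : Matrix (Fin p) (Fin q) A) (M : Matrix (Fin p) (Fin p) k) (i j : Fin q) :
    (xᵀ * liftMat k (A := A) M * x) i j = ∑ a, ∑ b, M a b • (x a i * x b j) := by
  simp only [Matrix.mul_apply, liftMat, Matrix.map_apply, Matrix.transpose_apply, Finset.sum_mul]
  rw [Finset.sum_comm]
  refine Finset.sum_congr rfl fun a _ => Finset.sum_congr rfl fun b _ => ?_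
  rw [← Algebra.commutes, mul_assoc, Algebra.smul_def]

lemma bb_form' {A : Type} [Ring A] [Algebra k A] {p q : ℕ}
    (x : Matrix (Fin p) (Fin q) A) (M : Matrix (Fin q) (Fin q) k) (i j : Fin p) :
    (x * liftMat k (A := A) M * xᵀ) i j = ∑ a, ∑ b, M a b • (x i a * x j b) := by
  simpa using bb_form xᵀ M i j

lemma bb_liftMat_mul {A : Type} [Ring A] [Algebra k A] {p q r : ℕ}
    (M : Matrix (Fin p) (Fin q) k) (N : Matrix (Fin q) (Fin r) k) :
    liftMat k (A := A) M * liftMat k (A := A) N = liftMat k (A := A) (M * N) := by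
  simp [liftMat, Matrix.map_mul]

lemma bb_liftMat_one {A : Type} [Ring A] [Algebra k A] {p : ℕ} :
    liftMat k (A := A) (1 : Matrix (Fin p) (Fin p) k) = 1 := by
  simp [liftMat, Matrix.map_one]

lemma bb_liftMat_map {A B : Type} [Ring A] [Algebra k A] [Ring B] [Algebra k B] {p q : ℕ}
    (M : Matrix (Fin p) (Fin q) k) (f : A →ₐ[k] B) :
    (liftMat k (A := A) M).map f = liftMat k (A := B) M := by
  ext; simp [liftMat]

variable {m n : ℕ} (E : Matrix (Fin m) (Fin m) k) (F : Matrix (Fin n) (Fin n) k)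

lemma bb_rel_left :
    liftMat k (A := BB k E F) F⁻¹ * (ZMat k E F)ᵀ * liftMat k (A := BB k E F) E * ZMat k E F
      = 1 := by
  let π := RingQuot.mkAlgHom k (BRel k E F)
  have hz : ZMat k E F = (gens k m n).map π := rfl
  rw [hz, ← bb_liftMat_map F⁻¹ π, ← bb_liftMat_map E π, ← Matrix.transpose_map,
    ← Matrix.map_mul, ← Matrix.map_mul, ← Matrix.map_mul]
  ext i j
  have := RingQuot.mkAlgHom_rel k (BRel.left (E := E) (F := F) i j)
  rw [Matrix.map_apply]
  refine this.trans ?_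
  by_cases h : i = j <;> simp [Matrix.one_apply, h]

lemma bb_rel_right :
    ZMat k E F * liftMat k (A := BB k E F) F⁻¹ * (ZMat k E F)ᵀ * liftMat k (A := BB k E F) E
      = 1 := by
  let π := RingQuot.mkAlgHom k (BRel k E F)
  have hz : ZMat k E F = (gens k m n).map π := rfl
  rw [hz, ← bb_liftMat_map F⁻¹ π, ← bb_liftMat_map E π, ← Matrix.transpose_map,
    ← Matrix.map_mul, ← Matrix.map_mul, ← Matrix.map_mul]
  ext i j
  have := RingQuot.mkAlgHom_rel k (BRel.right (E := E) (F := F) i j)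
  rw [Matrix.map_apply]
  refine this.trans ?_
  by_cases h : i = j <;> simp [Matrix.one_apply, h]

lemma bb_lift (hE : IsUnit E.det) (hF : IsUnit F.det) {A : Type} [Ring A] [Algebra k A]
    (x : Matrix (Fin m) (Fin n) A)
    (h1 : ∀ i j, ∑ a, ∑ b, E a b • (x a i * x b j) = F i j • (1 : A))
    (h2 : ∀ i j, ∑ a, ∑ b, F⁻¹ a b • (x i a * x j b) = E⁻¹ i j • (1 : A)) :
    ∃ f : BB k E F →ₐ[k] A, ∀ i j, f (ZMat k E F i j) = x i j := by
  let φ : FreeAlgebra k (Fin m × Fin n) →ₐ[k] A := FreeAlgebra.lift k fun p => x p.1 p.2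
  have hφ : (gens k m n).map φ = x := by ext i j; simp [gens, φ]
  have H1 : xᵀ * liftMat k (A := A) E * x = liftMat k (A := A) F := by
    ext i j
    rw [bb_form, h1]; simp [liftMat, Algebra.smul_def]
  have H2 : x * liftMat k (A := A) F⁻¹ * xᵀ = liftMat k (A := A) E⁻¹ := by
    ext i j
    rw [bb_form', h2]; simp [liftMat, Algebra.smul_def]
  have hrel : ∀ ⦃u v⦄, BRel k E F u v → φ u = φ v := by
    intro u v h
    cases h with
    | left i j =>
      have : (liftMat k (A := FreeAlgebra k (Fin m × Fin n)) F⁻¹ * (gens k m n)ᵀ *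
          liftMat k (A := FreeAlgebra k (Fin m × Fin n)) E * gens k m n).map φ = 1 := by
        rw [Matrix.map_mul, Matrix.map_mul, Matrix.map_mul, bb_liftMat_map, bb_liftMat_map,
          Matrix.transpose_map, hφ, Matrix.mul_assoc, Matrix.mul_assoc, ← Matrix.mul_assoc xᵀ, H1,
          bb_liftMat_mul, Matrix.nonsing_inv_mul _ hF, bb_liftMat_one]
      have h' := congrFun (congrFun this i) j
      rw [Matrix.map_apply] at h'
      refine h'.trans ?_
      by_cases h : i = j <;> simp [Matrix.one_apply, h]
    | right i j =>
      have : (gens k m n * liftMat k (A := FreeAlgebra k (Fin m × Fin n)) F⁻¹ * (gens k m n)ᵀ *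
          liftMat k (A := FreeAlgebra k (Fin m × Fin n)) E).map φ = 1 := by
        rw [Matrix.map_mul, Matrix.map_mul, Matrix.map_mul, bb_liftMat_map, bb_liftMat_map,
          Matrix.transpose_map, hφ, H2,
          bb_liftMat_mul, Matrix.nonsing_inv_mul _ hE, bb_liftMat_one]
      have h' := congrFun (congrFun this i) j
      rw [Matrix.map_apply] at h'
      refine h'.trans ?_
      by_cases h : i = j <;> simp [Matrix.one_apply, h]
  refine ⟨RingQuot.liftAlgHom k ⟨φ, hrel⟩, fun i j => ?_⟩
  simp only [ZMat, Matrix.of_apply, RingQuot.liftAlgHom_mkAlgHom_apply]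
  exact congrFun (congrFun hφ i) j

lemma bb_induction {P : BB k E F → Prop} (x : BB k E F)
    (hz : ∀ i j, P (ZMat k E F i j)) (hc : ∀ r : k, P (algebraMap k _ r))
    (ha : ∀ x y, P x → P y → P (x + y)) (hm : ∀ x y, P x → P y → P (x * y)) : P x := by
  obtain ⟨y, rfl⟩ := RingQuot.mkAlgHom_surjective k (BRel k E F) x
  induction y using FreeAlgebra.induction with
  | grade0 r => rw [AlgHom.commutes]; exact hc r
  | grade1 p => exact hz p.1 p.2
  | mul a b iha ihb => rw [map_mul]; exact hm _ _ iha ihb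
  | add a b iha ihb => rw [map_add]; exact ha _ _ iha ihb

/-- the inverse matrix of the generators -/
def bbInv : Matrix (Fin n) (Fin m) (BB k E F) :=
  liftMat k (A := BB k E F) F⁻¹ * (ZMat k E F)ᵀ * liftMat k (A := BB k E F) E

lemma bbInv_mul (i j : Fin n) :
    ∑ p, bbInv E F i p * ZMat k E F p j = if i = j then 1 else 0 := by
  have := congrFun (congrFun (bb_rel_left E F) i) j
  rw [← Matrix.one_apply, ← this]; rfl

lemma mul_bbInv (i j : Fin m) :
    ∑ a, ZMat k E F i a * bbInv E F a j = if i = j then 1 else 0 := by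
  have := congrFun (congrFun (bb_rel_right E F) i) j
  rw [← Matrix.one_apply, ← this, Matrix.mul_assoc, Matrix.mul_assoc, ← Matrix.mul_assoc (liftMat k F⁻¹)]; rfl

lemma bb_R1 (hF : IsUnit F.det) (i j : Fin n) :
    ∑ a, ∑ b, E a b • (ZMat k E F a i * ZMat k E F b j) = F i j • (1 : BB k E F) := by
  have h : (ZMat k E F)ᵀ * liftMat k (A := BB k E F) E * ZMat k E F = liftMat k F := by
    have := congrArg (fun M => liftMat k (A := BB k E F) F * M) (bb_rel_left E F)
    simp only [mul_one] at this
    rw [← this, Matrix.mul_assoc (liftMat k F⁻¹), Matrix.mul_assoc (liftMat k F⁻¹), ← Matrix.mul_assoc (liftMat k F), bb_liftMat_mul,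
      Matrix.mul_nonsing_inv _ hF, bb_liftMat_one, Matrix.one_mul]
  rw [← bb_form, h]; simp [liftMat, Algebra.smul_def]

lemma bb_R2 (hE : IsUnit E.det) (i j : Fin m) :
    ∑ a, ∑ b, F⁻¹ a b • (ZMat k E F i a * ZMat k E F j b) = E⁻¹ i j • (1 : BB k E F) := by
  have h : ZMat k E F * liftMat k (A := BB k E F) F⁻¹ * (ZMat k E F)ᵀ = liftMat k E⁻¹ := by
    have := congrArg (fun M => M * liftMat k (A := BB k E F) E⁻¹) (bb_rel_right E F)
    simp only [one_mul] at this
    rw [← this, Matrix.mul_assoc _ (liftMat k E), bb_liftMat_mul,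
      Matrix.mul_nonsing_inv _ hE, bb_liftMat_one, Matrix.mul_one]
  rw [← bb_form', h]; simp [liftMat, Algebra.smul_def]

lemma bb_S3 (hF : IsUnit F.det) (b : Fin n) (p : Fin m) :
    ∑ a, F b a • bbInv E F a p = ∑ r, E r p • ZMat k E F r b := by
  have h : liftMat k (A := BB k E F) F * bbInv E F =
      (ZMat k E F)ᵀ * liftMat k (A := BB k E F) E := by
    rw [bbInv, Matrix.mul_assoc, ← Matrix.mul_assoc (liftMat k F), bb_liftMat_mul,
      Matrix.mul_nonsing_inv _ hF, bb_liftMat_one, Matrix.one_mul]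
  have := congrFun (congrFun h b) p
  simpa [Matrix.mul_apply, liftMat, Algebra.smul_def, Algebra.commutes] using this

lemma bb_S4 (hE : IsUnit E.det) (i : Fin n) (q : Fin m) :
    ∑ p, E⁻¹ p q • bbInv E F i p = ∑ a, F⁻¹ i a • ZMat k E F q a := by
  have h : bbInv E F * liftMat k (A := BB k E F) E⁻¹ =
      liftMat k (A := BB k E F) F⁻¹ * (ZMat k E F)ᵀ := by
    rw [bbInv, Matrix.mul_assoc, bb_liftMat_mul,
      Matrix.mul_nonsing_inv _ hE, bb_liftMat_one, Matrix.mul_one]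
  have := congrFun (congrFun h i) q
  simpa only [Matrix.mul_apply, liftMat, Matrix.map_apply, Matrix.transpose_apply,
    Algebra.smul_def, Algebra.commutes] using this

lemma bb_swap {A : Type} [AddCommMonoid A] {m n : ℕ}
    (f : Fin n → Fin n → Fin m → Fin m → A) :
    ∑ a, ∑ b, ∑ p, ∑ q, f a b p q = ∑ p, ∑ q, ∑ a, ∑ b, f a b p q := by
  calc _ = ∑ a, ∑ p, ∑ b, ∑ q, f a b p q :=
        Finset.sum_congr rfl fun a _ => Finset.sum_comm
    _ = ∑ p, ∑ a, ∑ q, ∑ b, f a b p q := by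
        rw [Finset.sum_comm]
        exact Finset.sum_congr rfl fun p _ => Finset.sum_congr rfl fun a _ => Finset.sum_comm
    _ = _ := Finset.sum_congr rfl fun p _ => Finset.sum_comm

lemma bb_gamma_aux {Z : Type} [Ring Z] [Algebra k Z] {m n : ℕ}
    (z : Matrix (Fin m) (Fin n) Z) (w : Matrix (Fin n) (Fin m) Z)
    (E : Matrix (Fin m) (Fin m) k) (F : Matrix (Fin n) (Fin n) k)
    (R1 : ∀ i j, ∑ a, ∑ b, E a b • (z a i * z b j) = F i j • (1 : Z))
    (S1 : ∀ i j, ∑ a, z i a * w a j = if i = j then 1 else 0)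
    (S3 : ∀ b p, ∑ a, F b a • w a p = ∑ r, E r p • z r b) (i j : Fin n) :
    ∑ a, ∑ b, F a b • ((∑ p, MulOpposite.op (w a p) ⊗ₜ[k] z p i) *
      (∑ p, MulOpposite.op (w b p) ⊗ₜ[k] z p j)) = F i j • (1 : Zᵐᵒᵖ ⊗[k] Z) := by
  have key : ∀ p q, ∑ a, ∑ b, F a b • (w b q * w a p) = E p q • (1 : Z) := by
    intro p q
    calc _ = ∑ a, (∑ b, F a b • w b q) * w a p := by
          simp only [Finset.sum_mul, smul_mul_assoc]
      _ = ∑ a, ∑ r, E r q • (z r a * w a p) := by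
          simp only [S3, Finset.sum_mul, smul_mul_assoc]
      _ = ∑ r, E r q • ∑ a, (z r a * w a p) := by
          rw [Finset.sum_comm]; simp only [Finset.smul_sum]
      _ = _ := by simp [S1]
  calc _ = ∑ a, ∑ b, ∑ p, ∑ q, F a b • (MulOpposite.op (w b q * w a p) ⊗ₜ[k] (z p i * z q j)) := by
        simp only [Finset.sum_mul_sum, Finset.smul_sum, Algebra.TensorProduct.tmul_mul_tmul,
          MulOpposite.op_mul]
    _ = ∑ p, ∑ q, ∑ a, ∑ b, F a b • (MulOpposite.op (w b q * w a p) ⊗ₜ[k] (z p i * z q j)) := by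
        exact bb_swap _
    _ = ∑ p, ∑ q, MulOpposite.op (∑ a, ∑ b, F a b • (w b q * w a p)) ⊗ₜ[k] (z p i * z q j) := by
        simp only [Finset.op_sum, MulOpposite.op_smul, TensorProduct.sum_tmul,
          TensorProduct.smul_tmul']
    _ = 1 ⊗ₜ ∑ p, ∑ q, E p q • (z p i * z q j) := by
        simp only [key, MulOpposite.op_smul, MulOpposite.op_one, TensorProduct.tmul_sum,
          TensorProduct.smul_tmul]
    _ = _ := by rw [R1, TensorProduct.tmul_smul]; rfl

lemma bb_gamma_aux' {Z : Type} [Ring Z] [Algebra k Z] {m n : ℕ}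
    (z : Matrix (Fin m) (Fin n) Z) (w : Matrix (Fin n) (Fin m) Z)
    (E : Matrix (Fin m) (Fin m) k) (F : Matrix (Fin n) (Fin n) k)
    (R2 : ∀ i j, ∑ a, ∑ b, F⁻¹ a b • (z i a * z j b) = E⁻¹ i j • (1 : Z))
    (S2 : ∀ i j, ∑ a, w i a * z a j = if i = j then 1 else 0)
    (S4 : ∀ i q, ∑ p, E⁻¹ p q • w i p = ∑ a, F⁻¹ i a • z q a) (i j : Fin n) :
    ∑ a, ∑ b, F⁻¹ a b • ((∑ p, MulOpposite.op (w i p) ⊗ₜ[k] z p a) *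
      (∑ p, MulOpposite.op (w j p) ⊗ₜ[k] z p b)) = F⁻¹ i j • (1 : Zᵐᵒᵖ ⊗[k] Z) := by
  have key : ∑ p, ∑ q, E⁻¹ p q • (w j q * w i p) = F⁻¹ i j • (1 : Z) := by
    calc _ = ∑ q, w j q * (∑ p, E⁻¹ p q • w i p) := by
          rw [Finset.sum_comm]
          simp only [Finset.mul_sum, mul_smul_comm]
      _ = ∑ q, ∑ a, F⁻¹ i a • (w j q * z q a) := by
          simp only [S4, Finset.mul_sum, mul_smul_comm]
      _ = ∑ a, F⁻¹ i a • ∑ q, (w j q * z q a) := by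
          rw [Finset.sum_comm]; simp only [Finset.smul_sum]
      _ = _ := by simp [S2]
  calc _ = ∑ a, ∑ b, ∑ p, ∑ q, F⁻¹ a b • (MulOpposite.op (w j q * w i p) ⊗ₜ[k] (z p a * z q b)) := by
        simp only [Finset.sum_mul_sum, Finset.smul_sum, Algebra.TensorProduct.tmul_mul_tmul,
          MulOpposite.op_mul]
    _ = ∑ p, ∑ q, ∑ a, ∑ b, F⁻¹ a b • (MulOpposite.op (w j q * w i p) ⊗ₜ[k] (z p a * z q b)) := by
        exact bb_swap _
    _ = ∑ p, ∑ q, MulOpposite.op (w j q * w i p) ⊗ₜ[k] (∑ a, ∑ b, F⁻¹ a b • (z p a * z q b)) := by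
        simp only [TensorProduct.tmul_sum, TensorProduct.tmul_smul]
    _ = MulOpposite.op (∑ p, ∑ q, E⁻¹ p q • (w j q * w i p)) ⊗ₜ 1 := by
        simp only [R2, Finset.op_sum, MulOpposite.op_smul, TensorProduct.sum_tmul,
          TensorProduct.smul_tmul]
    _ = _ := by rw [key, MulOpposite.op_smul, ← TensorProduct.smul_tmul']; rfl

lemma bb_gamma (hE : IsUnit E.det) (hF : IsUnit F.det) :
    ∃ γ : BB k F F →ₐ[k] (BB k E F)ᵐᵒᵖ ⊗[k] BB k E F, ∀ i j,
      γ (ZMat k F F i j) = ∑ p, MulOpposite.op (bbInv E F i p) ⊗ₜ[k] ZMat k E F p j :=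
  bb_lift F F hF hF (fun i j => ∑ p, MulOpposite.op (bbInv E F i p) ⊗ₜ[k] ZMat k E F p j)
    (bb_gamma_aux _ _ E F (bb_R1 E F hF) (mul_bbInv E F) (bb_S3 E F hF))
    (bb_gamma_aux' _ _ E F (bb_R2 E F hE) (bbInv_mul E F) (bb_S4 E F hE))

/-- action of the enveloping algebra in the middle -/
def bbG (Z : Type) [Ring Z] [Algebra k Z] : Zᵐᵒᵖ ⊗[k] Z →ₐ[k] Module.End k (Z ⊗[k] Z) :=
  (Module.endTensorEndAlgHom (R := k) (S := k) (A := k) (M := Z) (N := Z)).comp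
    (Algebra.TensorProduct.map (Algebra.lsmul k k Z) (Algebra.lsmul k k Z))

lemma bbG_apply (Z : Type) [Ring Z] [Algebra k Z] (u v s t : Z) :
    bbG (k := k) Z (MulOpposite.op u ⊗ₜ v) (s ⊗ₜ t) = (s * u) ⊗ₜ (v * t) := rfl

/-- left multiplication on the first factor -/
def bbM (Z : Type) [Ring Z] [Algebra k Z] : Z →ₐ[k] Module.End k (Z ⊗[k] Z) :=
  (Module.endTensorEndAlgHom (R := k) (S := k) (A := k) (M := Z) (N := Z)).comp
    (Algebra.TensorProduct.includeLeft.comp (Algebra.lsmul k k Z))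

lemma bbM_apply (Z : Type) [Ring Z] [Algebra k Z] (u s t : Z) :
    bbM (k := k) Z u (s ⊗ₜ t) = (u * s) ⊗ₜ t := rfl

lemma bb_comm (Z : Type) [Ring Z] [Algebra k Z] (u : Z) (w : Zᵐᵒᵖ ⊗[k] Z) :
    Commute (bbM (k := k) Z u) (bbG Z w) := by
  induction w using TensorProduct.induction_on with
  | zero => rw [map_zero]; exact Commute.zero_right _
  | add a b ha hb => rw [map_add]; exact ha.add_right hb
  | tmul a b =>
    refine TensorProduct.ext' fun s t => ?_
    obtain ⟨a, rfl⟩ := MulOpposite.op_surjective a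
    simp only [Module.End.mul_apply, bbG_apply, bbM_apply, mul_assoc]

end helpers

/-- **Statement 9.** If `B(E,F) ≠ 0` then the right Galois map
`κᵣ = (m ⊗ id) ∘ (id ⊗ β) : B(E,F) ⊗ B(E,F) → B(E,F) ⊗ B(F)` is bijective, where
`β` is the unique algebra homomorphism with `β(z i j) = ∑ l, z i l ⊗ b l j`. -/
theorem BB_right_galois_bijective {m n : ℕ}
    (E : Matrix (Fin m) (Fin m) k) (F : Matrix (Fin n) (Fin n) k)
    (hE : IsUnit E.det) (hF : IsUnit F.det)
    (hnz : (1 : BB k E F) ≠ 0)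
    (β : BB k E F →ₐ[k] (BB k E F ⊗[k] BB k F F))
    (hβ : ∀ i j, β (ZMat k E F i j) = ∑ l, ZMat k E F i l ⊗ₜ[k] ZMat k F F l j) :
    Function.Bijective
      ((LinearMap.rTensor (BB k F F) (LinearMap.mul' k (BB k E F))) ∘ₗ
        (TensorProduct.assoc k (BB k E F) (BB k E F) (BB k F F)).symm.toLinearMap ∘ₗ
        (LinearMap.lTensor (BB k E F) β.toLinearMap) :
        (BB k E F ⊗[k] BB k E F) →ₗ[k] (BB k E F ⊗[k] BB k F F)) := by
  set κ := ((LinearMap.rTensor (BB k F F) (LinearMap.mul' k (BB k E F))) ∘ₗ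
        (TensorProduct.assoc k (BB k E F) (BB k E F) (BB k F F)).symm.toLinearMap ∘ₗ
        (LinearMap.lTensor (BB k E F) β.toLinearMap) :
        (BB k E F ⊗[k] BB k E F) →ₗ[k] (BB k E F ⊗[k] BB k F F)) with hκdef
  have hκ : ∀ x y, κ (x ⊗ₜ y) = (x ⊗ₜ[k] (1 : BB k F F)) * β y := by
    intro x y
    simp only [hκdef, LinearMap.comp_apply, LinearMap.lTensor_tmul, AlgHom.toLinearMap_apply,
      LinearEquiv.coe_coe]
    induction β y using TensorProduct.induction_on with
    | zero => simp
    | add a b ha hb => rw [TensorProduct.tmul_add, map_add, map_add, ha, hb, mul_add]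
    | tmul a b => simp
  constructor
  · obtain ⟨γ, hγ⟩ := bb_gamma E F hE hF
    let L : BB k E F ⊗[k] BB k F F →ₐ[k] Module.End k (BB k E F ⊗[k] BB k E F) :=
      Algebra.TensorProduct.lift (bbM (BB k E F)) ((bbG (BB k E F)).comp γ)
        (fun x y => bb_comm _ _ _)
    have hLt : ∀ x b, L (x ⊗ₜ b) = bbM (BB k E F) x * bbG (BB k E F) (γ b) := fun _ _ => rfl
    have hL : ∀ y t, L (β y) (1 ⊗ₜ t) = 1 ⊗ₜ (y * t) := by
      intro y
      refine bb_induction E F (P := fun y => ∀ t, L (β y) (1 ⊗ₜ t) = 1 ⊗ₜ (y * t)) y ?_ ?_ ?_ ?_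
      · intro i j t
        have e : ∀ l, L (ZMat k E F i l ⊗ₜ[k] ZMat k F F l j) (1 ⊗ₜ t) =
            ∑ p, (ZMat k E F i l * bbInv E F l p) ⊗ₜ (ZMat k E F p j * t) := by
          intro l
          simp only [hLt, hγ,
            Module.End.mul_apply, map_sum, LinearMap.sum_apply, bbG_apply, bbM_apply, one_mul]
        rw [hβ, map_sum, LinearMap.sum_apply]
        simp only [e]
        rw [Finset.sum_comm]
        simp only [← TensorProduct.sum_tmul, mul_bbInv]
        simp [TensorProduct.ite_tmul]
      · intro r t
        rw [AlgHom.commutes, AlgHom.commutes, Module.algebraMap_end_apply, ← TensorProduct.tmul_smul, Algebra.smul_def]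
      · intro a b ha hb t
        rw [map_add, map_add, LinearMap.add_apply, ha, hb, add_mul, TensorProduct.tmul_add]
      · intro a b ha hb t
        rw [map_mul, map_mul, Module.End.mul_apply, hb, ha, mul_assoc]
    have hinv : ∀ w, L (κ w) (1 ⊗ₜ 1) = w := by
      intro w
      induction w using TensorProduct.induction_on with
      | zero => rw [map_zero, map_zero, LinearMap.zero_apply]
      | add a b ha hb => rw [map_add, map_add, LinearMap.add_apply, ha, hb]
      | tmul x y =>
        rw [hκ, map_mul, Module.End.mul_apply, hL]
        simp only [hLt, map_one, mul_one, bbM_apply]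
    intro a b hab
    rw [← hinv a, hab, hinv b]
  · have hl : ∀ u w, w ∈ LinearMap.range κ → (u ⊗ₜ[k] (1 : BB k F F)) * w ∈ LinearMap.range κ := by
      rintro u _ ⟨w, rfl⟩
      induction w using TensorProduct.induction_on with
      | zero => rw [map_zero, mul_zero]; exact Submodule.zero_mem _
      | add a b ha hb => rw [map_add, mul_add]; exact Submodule.add_mem _ ha hb
      | tmul x y => exact ⟨(u * x) ⊗ₜ y, by rw [hκ, hκ, ← mul_assoc]; simp⟩
    have hr : ∀ v w, w ∈ LinearMap.range κ → w * β v ∈ LinearMap.range κ := by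
      rintro u _ ⟨w, rfl⟩
      induction w using TensorProduct.induction_on with
      | zero => rw [map_zero, zero_mul]; exact Submodule.zero_mem _
      | add a b ha hb => rw [map_add, add_mul]; exact Submodule.add_mem _ ha hb
      | tmul x y => exact ⟨x ⊗ₜ (y * u), by rw [hκ, hκ, map_mul, mul_assoc]⟩
    have hb : ∀ b c : BB k F F, (1 : BB k E F) ⊗ₜ[k] c ∈ LinearMap.range κ →
        (1 : BB k E F) ⊗ₜ[k] (c * b) ∈ LinearMap.range κ := by
      intro b
      refine bb_induction F F (P := fun b => ∀ c : BB k F F,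
        (1 : BB k E F) ⊗ₜ[k] c ∈ LinearMap.range κ →
        (1 : BB k E F) ⊗ₜ[k] (c * b) ∈ LinearMap.range κ) b ?_ ?_ ?_ ?_
      · intro i j c hc
        have e : (1 : BB k E F) ⊗ₜ[k] (c * ZMat k F F i j) =
            ∑ p, (bbInv E F i p ⊗ₜ[k] (1 : BB k F F)) *
              ((1 ⊗ₜ[k] c) * β (ZMat k E F p j)) := by
          simp only [hβ, Finset.mul_sum, Algebra.TensorProduct.tmul_mul_tmul, one_mul]
          rw [Finset.sum_comm]
          simp only [← TensorProduct.sum_tmul, bbInv_mul]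
          simp [TensorProduct.ite_tmul]
        rw [e]
        exact Submodule.sum_mem _ fun p _ => hl _ _ (hr _ _ hc)
      · intro r c hc
        rw [← Algebra.commutes, ← Algebra.smul_def, TensorProduct.tmul_smul]
        exact Submodule.smul_mem _ _ hc
      · intro a b ha hb c hc
        rw [mul_add, TensorProduct.tmul_add]
        exact Submodule.add_mem _ (ha c hc) (hb c hc)
      · intro a b ha hb c hc
        rw [← mul_assoc]
        exact hb _ (ha _ hc)
    have h1 : (1 : BB k E F) ⊗ₜ[k] (1 : BB k F F) ∈ LinearMap.range κ :=
      ⟨1 ⊗ₜ 1, by rw [hκ, map_one, mul_one]⟩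
    intro w
    change w ∈ LinearMap.range κ
    induction w using TensorProduct.induction_on with
    | zero => exact Submodule.zero_mem _
    | add a b ha hb => exact Submodule.add_mem _ ha hb
    | tmul x b =>
      have := hl x _ (hb b 1 h1)
      simpa using this
end
end

section
/- Let q ∈ k* and let F ∈ GL(n,k) with n ≥ 2. Assume that q² + tr(F·ᵀF⁻¹)·q + 1 = 0. Then the algebra B(E_q, F) is a non-zero algebra, i.e. 1 ≠ 0 in B(E_q, F). -/
open scoped TensorProduct
open Matrix

noncomputable section

variable (k : Type) [Field k]

/-- The matrix `E_q` with rows `(0, 1)` and `(−q⁻¹, 0)`, so that `B(E_q) = O(SL_q(2))`. -/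
def Eqm (q : k) : Matrix (Fin 2) (Fin 2) k := !![0, 1; -q⁻¹, 0]
namespace BBaux

lemma alg {K A : Type} [Field K] [Ring A] [Algebra K A] (c : K) (D U : A)
    (hDU : D * U = U * D + 1) :
    c • ((1 + D) * (1 + D)) + (1 + D) * ((-c) • ((1 + D) * (1 + D) * U)) +
      (-1 : K) • (((-c) • ((1 + D) * (1 + D) * U)) * (1 + D)) = 0 := by
  have h2 : (1 + D) * ((1 + D) * (1 + D) * U)
        - ((1 + D) * (1 + D) * U) * (1 + D) = (1 + D) * (1 + D) * (D * U - U * D) := by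
    noncomm_ring
  rw [hDU, add_sub_cancel_left, mul_one] at h2
  rw [mul_smul_comm, smul_mul_assoc]
  nth_rewrite 1 [← h2]
  rw [smul_sub]
  simp only [neg_smul, one_smul]
  abel

open Polynomial in
lemma exPQ {K : Type} [Field K] (c d : K) : ∃ (P Q : Module.End K K[X]) (v : K[X]),
    v ≠ 0 ∧ P v = v ∧ c • (P * P) + P * Q + d • (Q * P) = 0 := by
  by_cases h : 1 + d = 0
  · have hd : d = -1 := by linear_combination h
    subst hd
    let D : Module.End K K[X] := Polynomial.derivative
    let U : Module.End K K[X] := LinearMap.mulLeft K X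
    have hDU : D * U = U * D + 1 := by
      apply LinearMap.ext; intro p
      simp [D, U, Module.End.mul_apply]
      ring
    refine ⟨1 + D, (-c) • ((1 + D) * (1 + D) * U), 1, one_ne_zero, by simp [D], ?_⟩
    exact alg c D U hDU
  · refine ⟨1, (-c / (1 + d)) • 1, 1, one_ne_zero, by simp, ?_⟩
    simp only [mul_one, one_mul, smul_smul, ← add_smul]
    rw [show c + -c / (1 + d) + d * (-c / (1 + d)) = 0 by field_simp; ring, zero_smul]

lemma exRep {K : Type} [Field K] {n : ℕ} (G : Fin n → Fin n → K) (α x : Fin n → K)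
    (hα : ∑ i, ∑ j, G i j * α i * α j = 0) (hx : ∑ i, ∑ j, G i j * x i * α j = 1) :
    ∃ (b : Fin n → Module.End K (Polynomial K)) (v : Polynomial K), v ≠ 0 ∧
      ∑ i, ∑ j, G i j • (b i * b j) = 0 ∧ (∑ i, (∑ j, G i j * α j) • b i) v = v := by
  obtain ⟨P, Q, v, hv, hP, h⟩ := exPQ (∑ i, ∑ j, G i j * x i * x j) (∑ i, ∑ j, G i j * α i * x j)
  refine ⟨fun i => x i • P + α i • Q, v, hv, ?_, ?_⟩
  · have : ∑ i, ∑ j, G i j • ((x i • P + α i • Q) * (x j • P + α j • Q)) =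
      (∑ i, ∑ j, G i j * x i * x j) • (P * P) + (∑ i, ∑ j, G i j * x i * α j) • (P * Q)
      + (∑ i, ∑ j, G i j * α i * x j) • (Q * P) + (∑ i, ∑ j, G i j * α i * α j) • (Q * Q) := by
      simp only [Finset.sum_smul, ← Finset.sum_add_distrib]
      refine Finset.sum_congr rfl fun i _ => Finset.sum_congr rfl fun j _ => ?_
      simp only [mul_add, add_mul, smul_mul_assoc, mul_smul_comm, smul_add, smul_smul, mul_assoc]
      rw [mul_comm (x j) (α i)]
      rw [mul_comm (x j) (x i), mul_comm (α j) (x i), mul_comm (α j) (α i)]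
      abel
    rw [this, hα, hx, one_smul, zero_smul, add_zero, h]
  · have : ∑ i, (∑ j, G i j * α j) • (x i • P + α i • Q) =
      (∑ i, ∑ j, G i j * x i * α j) • P + (∑ i, ∑ j, G i j * α i * α j) • Q := by
      simp only [Finset.sum_smul, ← Finset.sum_add_distrib]
      refine Finset.sum_congr rfl fun i _ => Finset.sum_congr rfl fun j _ => ?_
      simp only [smul_add, smul_smul]
      congr 2 <;> ring
    rw [this, hα, hx, one_smul, zero_smul, add_zero, hP]

lemma exIso {K : Type} [Field K] [IsAlgClosed K] {n : ℕ} (hn : 2 ≤ n) (F G : Matrix (Fin n) (Fin n) K)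
    (hFG : F * G = 1) : ∃ α x : Fin n → K, ∑ i, ∑ j, G i j * α i * α j = 0 ∧
      ∑ i, ∑ j, G i j * x i * α j = 1 := by
  have key : ∃ α : Fin n → K, α ≠ 0 ∧ ∑ i, ∑ j, G i j * α i * α j = 0 := by
    let i0 : Fin n := ⟨0, by omega⟩
    let i1 : Fin n := ⟨1, by omega⟩
    have h01 : i0 ≠ i1 := by simp [i0, i1]
    have expand : ∀ s t : K, ∑ i, ∑ j, G i j * (Pi.single i0 s + Pi.single i1 t : Fin n → K) i *
        (Pi.single i0 s + Pi.single i1 t : Fin n → K) j =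
        G i0 i0 * s * s + G i0 i1 * s * t + G i1 i0 * t * s + G i1 i1 * t * t := by
      intro s t
      simp only [Pi.add_apply, mul_add, add_mul, Finset.sum_add_distrib, Pi.single_apply,
        mul_ite, mul_zero, ite_mul, zero_mul, Finset.sum_ite_eq', Finset.mem_univ, if_true]
      ring
    by_cases h : G i0 i0 = 0
    · refine ⟨Pi.single i0 1 + Pi.single i1 0, ?_, ?_⟩
      · intro h; have := congrFun h i0; simp at this
      · rw [expand, h]; ring
    · obtain ⟨s, hs⟩ := IsAlgClosed.exists_root
        (Polynomial.C (G i0 i0) * Polynomial.X ^ 2 + Polynomial.C (G i0 i1 + G i1 i0) * Polynomial.X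
          + Polynomial.C (G i1 i1)) (by rw [Polynomial.degree_quadratic h]; decide)
      refine ⟨Pi.single i0 s + Pi.single i1 1, ?_, ?_⟩
      · intro h; have := congrFun h i1; simp [Pi.single_apply, h01.symm] at this
      · rw [expand]
        simp [Polynomial.IsRoot] at hs
        linear_combination hs
  obtain ⟨α, hα0, hα⟩ := key
  have hγ : G *ᵥ α ≠ 0 := by
    intro h
    apply hα0
    rw [← Matrix.one_mulVec α, ← hFG, ← Matrix.mulVec_mulVec, h, Matrix.mulVec_zero]
  obtain ⟨i, hi⟩ := Function.ne_iff.mp hγ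
  refine ⟨α, Pi.single i ((G *ᵥ α) i)⁻¹, hα, ?_⟩
  rw [Finset.sum_eq_single i]
  · have : (G *ᵥ α) i * ((G *ᵥ α) i)⁻¹ = 1 := mul_inv_cancel₀ hi
    simp only [Pi.single_eq_same]
    generalize ((G *ᵥ α) i)⁻¹ = w at this ⊢
    rw [← this, Matrix.mulVec, dotProduct, Finset.sum_mul]
    refine Finset.sum_congr rfl fun j _ => by ring
  · intro b _ hb; simp [hb]
  · simp

section core
variable {K : Type} [Field K] {n : ℕ}

abbrev T (K : Type) [Field K] (n : ℕ) := FreeAlgebra K (Fin n)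
abbrev bb (K : Type) [Field K] {n : ℕ} (i : Fin n) : T K n := FreeAlgebra.ι K i

lemma T_ind (S : Submodule K (T K n)) (h1 : 1 ∈ S) (hb : ∀ i t, bb K i * t ∈ S) (t : T K n) :
    t ∈ S := by
  have : ∀ t : T K n, ∃ (c : K) (u : Fin n → T K n), t = algebraMap K _ c + ∑ i, bb K i * u i := by
    intro t
    induction t using FreeAlgebra.induction with
    | grade0 r => exact ⟨r, 0, by simp⟩
    | grade1 i => exact ⟨0, Pi.single i 1, by simp [Pi.single_apply]⟩
    | mul a b ha hb =>
      obtain ⟨c, u, hu⟩ := ha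
      obtain ⟨c', u', hu'⟩ := hb
      refine ⟨c * c', fun i => c • u' i + u i * b, ?_⟩
      simp only [mul_add, Finset.sum_add_distrib, ← mul_assoc, mul_smul_comm, ← Finset.smul_sum,
        ← Finset.sum_mul]
      rw [← add_assoc]
      conv_lhs => rw [hu, add_mul]
      congr 1
      rw [hu', mul_add, map_mul, Algebra.smul_def]
    | add a b ha hb =>
      obtain ⟨c, u, hu⟩ := ha
      obtain ⟨c', u', hu'⟩ := hb
      refine ⟨c + c', u + u', ?_⟩
      rw [hu, hu', map_add]
      simp only [Pi.add_apply, mul_add, Finset.sum_add_distrib]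
      abel
  obtain ⟨c, u, rfl⟩ := this t
  refine S.add_mem ?_ (S.sum_mem fun i _ => hb _ _)
  rw [Algebra.algebraMap_eq_smul_one]
  exact S.smul_mem _ h1

/-- auxiliary operator -/
def op (q : K) (F : Matrix (Fin n) (Fin n) K) (j : Fin n) :
    Module.End K (T K n × (Fin n → T K n)) :=
  LinearMap.prod ((LinearMap.mulLeft K (bb K j)).comp (LinearMap.fst K _ _))
    (LinearMap.pi fun i => q⁻¹ • (LinearMap.mulLeft K (bb K i)).comp
        ((LinearMap.proj j).comp (LinearMap.snd K _ _)) + F i j • LinearMap.fst K _ _)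

def full (q : K) (F : Matrix (Fin n) (Fin n) K) (α : Fin n → K) :
    T K n →ₗ[K] (T K n × (Fin n → T K n)) where
  toFun t := FreeAlgebra.lift K (op q F) t (1, fun i => algebraMap K _ (α i))
  map_add' := by simp
  map_smul' := by simp

lemma full_b (q : K) (F : Matrix (Fin n) (Fin n) K) (α : Fin n → K) (j : Fin n) (t : T K n) :
    full q F α (bb K j * t) = op q F j (full q F α t) := by
  simp [full, bb]

lemma full_fst (q : K) (F : Matrix (Fin n) (Fin n) K) (α : Fin n → K) (t : T K n) :
    (full q F α t).1 = t := by
  have := T_ind (LinearMap.eqLocus ((LinearMap.fst K _ _).comp (full q F α)) LinearMap.id)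
  suffices h : ∀ t : T K n, (∀ u : T K n, (FreeAlgebra.lift K (op q F) t
      (u, fun i => 0)).1 = t * u) ∧ ∀ p, (FreeAlgebra.lift K (op q F) t p).1 = t * p.1 by
    have := (h t).2 (1, fun i => algebraMap K _ (α i))
    simpa [full] using this
  suffices h : ∀ t : T K n, ∀ p, (FreeAlgebra.lift K (op q F) t p).1 = t * p.1 from
    fun t => ⟨fun u => h t _, h t⟩
  intro t
  induction t using FreeAlgebra.induction with
  | grade0 r => intro p; simp [Algebra.smul_def, Module.algebraMap_end_apply]
  | grade1 i => intro p; simp [op, bb]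
  | mul a b ha hb => intro p; rw [map_mul, Module.End.mul_apply, ha, hb, mul_assoc]
  | add a b ha hb => intro p; rw [map_add, LinearMap.add_apply, Prod.fst_add, ha, hb, add_mul]

def aop (q : K) (F : Matrix (Fin n) (Fin n) K) (α : Fin n → K) (i : Fin n) : Module.End K (T K n) :=
  (LinearMap.proj i).comp ((LinearMap.snd K _ _).comp (full q F α))

lemma aop_b (q : K) (F : Matrix (Fin n) (Fin n) K) (α : Fin n → K) (i j : Fin n) (t : T K n) :
    aop q F α i (bb K j * t) = q⁻¹ • (bb K i * aop q F α j t) + F i j • t := by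
  have h := full_fst q F α t
  simp only [aop, LinearMap.comp_apply, full_b]
  simp [op, h]

lemma aop_one (q : K) (F : Matrix (Fin n) (Fin n) K) (α : Fin n → K) (i : Fin n) :
    aop q F α i 1 = α i • 1 := by
  simp [aop, full, Algebra.algebraMap_eq_smul_one]

/-- the quadratic element -/
def rr (G : Matrix (Fin n) (Fin n) K) : T K n := ∑ i, ∑ j, G i j • (bb K i * bb K j)
def be (G : Matrix (Fin n) (Fin n) K) (α : Fin n → K) : T K n := ∑ i, (∑ j, G i j * α j) • bb K i

def NN (G : Matrix (Fin n) (Fin n) K) (α : Fin n → K) : Submodule (T K n) (T K n) :=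
  Submodule.span (T K n) (Set.range (fun t => rr G * t) ∪ {be G α - 1})

lemma one_notMem (G : Matrix (Fin n) (Fin n) K) (α x : Fin n → K)
    (hα : ∑ i, ∑ j, G i j * α i * α j = 0) (hx : ∑ i, ∑ j, G i j * x i * α j = 1) :
    (1 : T K n) ∉ NN G α := by
  obtain ⟨b, v, hv, hr, hb⟩ := exRep G α x hα hx
  intro h1
  have : ∀ t ∈ NN G α, FreeAlgebra.lift K b t v = 0 := by
    intro t ht
    induction ht using Submodule.span_induction with
    | mem y hy =>
      rcases hy with ⟨t, rfl⟩ | rfl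
      · have : FreeAlgebra.lift K b (rr G) = 0 := by
          rw [← hr]; simp [rr, bb]
        simp [this]
      · have : FreeAlgebra.lift K b (be G α) = ∑ i, (∑ j, G i j * α j) • b i := by
          simp [be, bb]
        rw [map_sub, this, LinearMap.sub_apply, hb]; simp
    | zero => simp
    | add y z _ _ hy hz => simp [hy, hz]
    | smul a y _ hy => simp [hy]
  exact hv (by simpa using this 1 h1)

variable (q : K) (F G : Matrix (Fin n) (Fin n) K) (α : Fin n → K)

lemma X_mem (hq : q ≠ 0) (hGF : G * F = 1) (t : T K n) :
    ∑ i, ∑ j, G i j • (bb K i * aop q F α j t) - t ∈ NN G α := by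
  let f : T K n →ₗ[K] T K n :=
    ∑ i, ∑ j, G i j • (LinearMap.mulLeft K (bb K i)).comp (aop q F α j) - LinearMap.id
  have hf : ∀ t, f t = ∑ i, ∑ j, G i j • (bb K i * aop q F α j t) - t := by
    intro t; simp [f]
  rw [← hf]
  refine T_ind (((NN G α).restrictScalars K).comap f) ?_ ?_ t
  · simp only [Submodule.mem_comap, Submodule.restrictScalars_mem]
    apply Submodule.subset_span
    right
    rw [hf]
    simp [be, aop_one, smul_smul, Finset.sum_smul]
  · intro k t
    simp only [Submodule.mem_comap, Submodule.restrictScalars_mem]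
    have : f (bb K k * t) = q⁻¹ • (rr G * aop q F α k t) := by
      rw [hf]
      simp only [aop_b, mul_add, smul_add, Finset.sum_add_distrib, mul_smul_comm]
      have h2 : ∑ i, ∑ j, G i j • F j k • (bb K i * t) = bb K k * t := by
        simp only [smul_smul, ← Finset.sum_smul]
        simp only [← Matrix.mul_apply, hGF]
        simp [Matrix.one_apply]
      rw [h2, add_sub_cancel_right]
      simp only [rr, Finset.sum_mul, Finset.smul_sum, smul_mul_assoc, mul_assoc]
      refine Finset.sum_congr rfl fun i _ => Finset.sum_congr rfl fun j _ => ?_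
      rw [smul_comm]
    rw [this]
    exact ((NN G α).restrictScalars K).smul_mem _ (Submodule.subset_span (Or.inl ⟨_, rfl⟩))

lemma a_r (hq : q ≠ 0) (hFG : F * G = 1) (htr : q ^ 2 + (∑ i, ∑ j, G i j * F i j) * q + 1 = 0)
    (k : Fin n) (t : T K n) : aop q F α k (rr G * t) =
      (q⁻¹ * q⁻¹) • (bb K k * (∑ i, ∑ j, G i j • (bb K i * aop q F α j t) - t)) := by
  have htr' : ∑ i, ∑ j, G i j * F i j = - q - q⁻¹ := by
    field_simp; linear_combination htr
  have e : aop q F α k (rr G * t) = ∑ i, ∑ j, ((q⁻¹ * q⁻¹) • (bb K k * (G i j • (bb K i * aop q F α j t)))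
     + (G i j * F i j) • q⁻¹ • (bb K k * t) + (F k i * G i j) • (bb K j * t)) := by
    simp only [rr, Finset.sum_mul, map_sum, smul_mul_assoc, map_smul, mul_assoc, aop_b]
    refine Finset.sum_congr rfl fun i _ => Finset.sum_congr rfl fun j _ => ?_
    simp only [mul_add, smul_add, mul_smul_comm, smul_smul]
    congr 1
    · congr 2 <;> ring
    · congr 1; ring
  rw [e]
  simp only [Finset.sum_add_distrib, ← Finset.sum_smul, htr']
  have h3 : ∑ i, ∑ j, (F k i * G i j) • (bb K j * t) = bb K k * t := by
    rw [Finset.sum_comm]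
    simp only [← Finset.sum_smul, ← Matrix.mul_apply, hFG]
    simp [Matrix.one_apply]
  rw [h3, mul_sub, smul_sub]
  simp only [Finset.mul_sum, Finset.smul_sum]
  rw [add_assoc, sub_eq_add_neg]
  congr 1
  rw [smul_smul, ← neg_smul]
  nth_rewrite 2 [← one_smul K (bb K k * t)]
  rw [← add_smul]
  congr 1
  field_simp; ring

lemma a_be (hFG : F * G = 1) (hα : ∑ i, ∑ j, G i j * α i * α j = 0) (k : Fin n) :
    aop q F α k (be G α - 1) = 0 := by
  have e : ∀ i, aop q F α k (bb K i) = (q⁻¹ * α i) • bb K k + F k i • 1 := by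
    intro i
    have := aop_b q F α k i 1
    rw [mul_one, aop_one] at this
    rw [this]; simp [smul_smul]
  simp only [be, map_sub, map_sum, map_smul, e, aop_one, smul_add, Finset.sum_add_distrib, smul_smul,
    ← Finset.sum_smul]
  have h1 : ∑ i, (∑ j, G i j * α j) * (q⁻¹ * α i) = 0 := by
    rw [← mul_zero q⁻¹, ← hα, Finset.mul_sum]
    refine Finset.sum_congr rfl fun i _ => ?_
    rw [Finset.sum_mul, Finset.mul_sum]
    refine Finset.sum_congr rfl fun j _ => by ring
  have h2 : ∑ i, (∑ j, G i j * α j) * F k i = α k := by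
    have : (F *ᵥ (G *ᵥ α)) k = α k := by rw [Matrix.mulVec_mulVec, hFG, Matrix.one_mulVec]
    rw [← this]
    simp only [Matrix.mulVec, dotProduct]
    exact Finset.sum_congr rfl fun i _ => mul_comm _ _
  rw [h1, h2]; simp

lemma a_mem (hq : q ≠ 0) (hFG : F * G = 1) (hGF : G * F = 1)
    (htr : q ^ 2 + (∑ i, ∑ j, G i j * F i j) * q + 1 = 0)
    (hα : ∑ i, ∑ j, G i j * α i * α j = 0) (t : T K n) (ht : t ∈ NN G α) :
    ∀ k, aop q F α k t ∈ NN G α := by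
  have smulmem : ∀ (c : K) (y), y ∈ NN G α → c • y ∈ NN G α := fun c y hy =>
    ((NN G α).restrictScalars K).smul_mem c hy
  induction ht using Submodule.span_induction with
  | mem y hy =>
    intro k
    rcases hy with ⟨t, rfl⟩ | rfl
    · simp only
      rw [a_r q F G α hq hFG htr]
      exact smulmem _ _ ((NN G α).smul_mem _ (X_mem q F G α hq hGF t))
    · rw [a_be q F G α hFG hα]; exact zero_mem _
  | zero => simp
  | add y z _ _ hy hz => intro k; rw [map_add]; exact add_mem (hy k) (hz k)
  | smul a y hyN hy =>
    have hyN : y ∈ NN G α := hyN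
    suffices h : ∀ a : T K n, ∀ y ∈ NN G α, (∀ k, aop q F α k y ∈ NN G α) →
        ∀ k, aop q F α k (a * y) ∈ NN G α from h a y hyN hy
    intro a
    induction a using FreeAlgebra.induction with
    | grade0 r => intro y _ hy k; rw [← Algebra.smul_def, map_smul]; exact smulmem _ _ (hy k)
    | grade1 i =>
      intro y hyN hy k
      rw [aop_b]
      exact add_mem (smulmem _ _ ((NN G α).smul_mem _ (hy i))) (smulmem _ _ hyN)
    | mul a b ha hb =>
      intro y hyN hy k
      rw [mul_assoc]
      exact ha _ ((NN G α).smul_mem b hyN) (hb y hyN hy) k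
    | add a b ha hb =>
      intro y hyN hy k
      rw [add_mul, map_add]; exact add_mem (ha y hyN hy k) (hb y hyN hy k)

lemma core [IsAlgClosed K] (hn : 2 ≤ n) (hq : q ≠ 0) (hFG : F * G = 1) (hGF : G * F = 1)
    (htr : q ^ 2 + (∑ i, ∑ j, G i j * F i j) * q + 1 = 0) :
    ∃ (M : Type) (_ : AddCommGroup M) (_ : Module K M) (_ : Nontrivial M)
      (a b : Fin n → Module.End K M),
      (∀ i j, a i * b j = q⁻¹ • (b i * a j) + F i j • 1) ∧
      ∑ i, ∑ j, G i j • (a i * a j) = 0 ∧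
      ∑ i, ∑ j, G i j • (b i * b j) = 0 ∧
      ∑ i, ∑ j, G i j • (b i * a j) = 1 ∧
      ∑ i, ∑ j, G i j • (a i * b j) = (-q) • 1 := by
  obtain ⟨α, x, hα, hx⟩ := exIso hn F G hFG
  let N : Submodule K (T K n) := (NN G α).restrictScalars K
  let a : Fin n → Module.End K (T K n ⧸ N) := fun k =>
    N.mapQ N (aop q F α k) fun t ht => a_mem q F G α hq hFG hGF htr hα t ht k
  let b : Fin n → Module.End K (T K n ⧸ N) := fun k =>
    N.mapQ N (LinearMap.mulLeft K (bb K k)) fun t ht => (NN G α).smul_mem (bb K k) ht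
  have ha : ∀ k t, a k (N.mkQ t) = N.mkQ (aop q F α k t) := fun k t => rfl
  have hb : ∀ k t, b k (N.mkQ t) = N.mkQ (bb K k * t) := fun k t => rfl
  have ext' : ∀ f g : Module.End K (T K n ⧸ N), (∀ t, f (N.mkQ t) = g (N.mkQ t)) → f = g := by
    intro f g h
    apply LinearMap.ext; intro y
    obtain ⟨t, rfl⟩ := N.mkQ_surjective y
    exact h t
  have R1 : ∀ i j, a i * b j = q⁻¹ • (b i * a j) + F i j • 1 := by
    intro i j
    apply ext'; intro t
    simp only [Module.End.mul_apply, LinearMap.add_apply, LinearMap.smul_apply, ha, hb, aop_b,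
      map_add, map_smul, Module.End.one_apply]
  have RX : ∑ i, ∑ j, G i j • (b i * a j) = 1 := by
    apply ext'; intro t
    simp only [Module.End.mul_apply, LinearMap.sum_apply, LinearMap.smul_apply, ha, hb,
      Module.End.one_apply, ← map_smul, ← map_sum]
    rw [← sub_eq_zero, ← map_sub, Submodule.mkQ_apply, Submodule.Quotient.mk_eq_zero]
    exact X_mem q F G α hq hGF t
  have htr' : ∑ i, ∑ j, G i j * F i j = - q - q⁻¹ := by
    field_simp; linear_combination htr
  have RY : ∑ i, ∑ j, G i j • (a i * b j) = (-q) • 1 := by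
    simp only [R1, smul_add, Finset.sum_add_distrib, smul_smul, ← Finset.sum_smul, htr']
    have : ∑ i, ∑ j, (G i j * q⁻¹) • (b i * a j) = q⁻¹ • ∑ i, ∑ j, G i j • (b i * a j) := by
      simp only [Finset.smul_sum, smul_smul, mul_comm]
    rw [this, RX, ← add_smul]; congr 1; ring
  have RB : ∑ i, ∑ j, G i j • (b i * b j) = 0 := by
    apply ext'; intro t
    simp only [Module.End.mul_apply, LinearMap.sum_apply, LinearMap.smul_apply, hb,
      LinearMap.zero_apply, ← map_smul, ← map_sum]
    rw [Submodule.mkQ_apply, Submodule.Quotient.mk_eq_zero]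
    have : rr G * t ∈ NN G α := Submodule.subset_span (Or.inl ⟨_, rfl⟩)
    simpa [rr, Finset.sum_mul, mul_assoc, N] using this
  refine ⟨T K n ⧸ N, inferInstance, inferInstance, ?_, a, b, R1, ?_, RB, RX, RY⟩
  · refine ⟨⟨N.mkQ 1, 0, ?_⟩⟩
    rw [Submodule.mkQ_apply, Ne, Submodule.Quotient.mk_eq_zero]
    exact one_notMem G α x hα hx
  · have sb : ∀ k, (∑ i, ∑ j, G i j • (a i * a j)) * b k = 0 := by
      intro k
      have : (∑ i, ∑ j, G i j • (a i * a j)) * b k =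
          q⁻¹ • ((∑ i, ∑ j, G i j • (a i * b j)) * a k) + ∑ i, ∑ j, (G i j * F j k) • a i := by
        simp only [Finset.sum_mul, Finset.smul_sum, ← Finset.sum_add_distrib]
        refine Finset.sum_congr rfl fun i _ => Finset.sum_congr rfl fun j _ => ?_
        rw [smul_mul_assoc, mul_assoc, R1, mul_add, smul_add, mul_smul_comm, mul_smul_comm, mul_one,
          smul_smul (G i j) (F j k), smul_comm, smul_mul_assoc, mul_assoc]
      rw [this, RY]
      simp only [← Finset.sum_smul, ← Matrix.mul_apply, hGF]
      simp [Matrix.one_apply, smul_smul, hq]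
    apply ext'; intro t
    refine T_ind (LinearMap.ker ((∑ i, ∑ j, G i j • (a i * a j)).comp N.mkQ)) ?_ ?_ t
    · rw [LinearMap.mem_ker, LinearMap.comp_apply]
      simp only [Module.End.mul_apply, LinearMap.sum_apply, LinearMap.smul_apply, ha, aop_one,
        map_smul, smul_smul, ← Finset.sum_smul]
      have : ∑ i, ∑ j, G i j * (α j * α i) = 0 := by
        rw [← hα]
        refine Finset.sum_congr rfl fun i _ => Finset.sum_congr rfl fun j _ => by ring
      rw [this, zero_smul]
    · intro k t
      rw [LinearMap.mem_ker, LinearMap.comp_apply, ← hb, ← Module.End.mul_apply, sb]; rfl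

end core

end BBaux

/-- **Statement 11.** If `q ∈ k*` satisfies `q² + tr(F·ᵀF⁻¹)·q + 1 = 0` then
`B(E_q, F)` is a non-zero algebra. -/
theorem BB_Eq_nonzero {n : ℕ} (hn : 2 ≤ n) (q : k) (hq : q ≠ 0)
    (F : Matrix (Fin n) (Fin n) k) (hF : IsUnit F.det)
    (htr : q ^ 2 + (F * F⁻¹ᵀ).trace * q + 1 = 0) :
    (1 : BB k (Eqm k q) F) ≠ 0 := by
  let K := AlgebraicClosure k
  let φ : k →+* K := algebraMap k K
  have hFG : F * F⁻¹ = 1 := Matrix.mul_nonsing_inv F hF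
  have hGF : F⁻¹ * F = 1 := Matrix.nonsing_inv_mul F hF
  obtain ⟨M, _, _, _, a, b, R1, RA, RB, RX, RY⟩ := BBaux.core (K := K) (φ q) (F.map φ) (F⁻¹.map φ) hn
    (by simpa using hq)
    (by rw [← Matrix.map_mul, hFG, Matrix.map_one _ φ.map_zero φ.map_one])
    (by rw [← Matrix.map_mul, hGF, Matrix.map_one _ φ.map_zero φ.map_one])
    (by
      have := congrArg φ htr
      simp only [Matrix.trace, Matrix.diag, Matrix.mul_apply, Matrix.transpose_apply, map_add,
        map_mul, map_pow, map_sum, map_one, map_zero] at this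
      rw [← this]
      simp only [Matrix.map_apply, mul_comm])
  letI : Algebra k (Module.End K M) := Algebra.compHom (Module.End K M) φ
  have hsm : ∀ (c : k) , algebraMap k (Module.End K M) c = φ c • 1 := fun c =>
    Algebra.algebraMap_eq_smul_one (A := Module.End K M) (φ c)
  let z : Fin 2 × Fin n → Module.End K M := fun p => if p.1 = 0 then a p.2 else b p.2
  have key : ∀ ⦃x y⦄, BRel k (Eqm k q) F x y →
      FreeAlgebra.lift k z x = FreeAlgebra.lift k z y := by
    intro x y h
    cases h with
    | left i j =>
      have e1 : ∀ l, (∑ m, φ (F⁻¹ i m) • (a m * b l - (φ q)⁻¹ • (b m * a l))) =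
          (if i = l then 1 else 0 : Module.End K M) := by
        intro l
        have : ∀ m, a m * b l - (φ q)⁻¹ • (b m * a l) = φ (F m l) • 1 := by
          intro m; rw [R1]; simp
        simp only [this, smul_smul, ← map_mul, ← Finset.sum_smul, ← map_sum]
        rw [← Matrix.mul_apply, hGF, Matrix.one_apply]
        split_ifs <;> simp
      have e2 := e1 j
      rw [Matrix.one_apply]
      have : FreeAlgebra.lift k z (if i = j then 1 else 0) = if i = j then 1 else 0 := by
        split_ifs <;> simp
      rw [this, ← e2]
      simp only [Matrix.mul_apply, Fin.sum_univ_two, map_add, map_mul, map_sum, liftMat, gens,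
        Matrix.map_apply, Matrix.of_apply, Matrix.transpose_apply, FreeAlgebra.lift_ι_apply,
        AlgHom.commutes, hsm, Eqm, z]
      simp [Finset.sum_mul, ← Finset.sum_add_distrib, smul_sub]
      simp only [Finset.smul_sum]
      rw [neg_add_eq_sub]
      congr 1
      exact Finset.sum_congr rfl fun x _ => smul_comm _ _ _
    | right i j =>
      simp only [Matrix.map_apply] at RA RB RX RY
      have hq' : φ q ≠ 0 := by simpa using hq
      have conv1 : ∀ (u v : Fin n → Module.End K M), ∑ x, (∑ y, u y * (φ (F⁻¹ y x) • 1)) * v x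
          = ∑ y, ∑ x, φ (F⁻¹ y x) • (u y * v x) := by
        intro u v
        rw [Finset.sum_comm]
        refine Finset.sum_congr rfl fun x _ => ?_
        rw [Finset.sum_mul]
        refine Finset.sum_congr rfl fun y _ => ?_
        simp
      rw [Matrix.one_apply]
      have : FreeAlgebra.lift k z (if i = j then 1 else 0) = if i = j then 1 else 0 := by
        split_ifs <;> simp
      rw [this]
      simp only [Matrix.mul_apply, Fin.sum_univ_two, map_add, map_mul, map_sum, liftMat, gens,
        Matrix.map_apply, Matrix.of_apply, Matrix.transpose_apply, FreeAlgebra.lift_ι_apply,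
        AlgHom.commutes, hsm, z, conv1]
      fin_cases i <;> fin_cases j <;> simp [Eqm, RA, RB, RX, RY, hq', smul_smul]
  intro h
  have := congrArg (RingQuot.liftAlgHom k ⟨FreeAlgebra.lift k z, key⟩) h
  rw [map_one, map_zero] at this
  exact one_ne_zero this
end
end
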